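/- For every distortion function d ∈ F_D and every utility function u ∈ F_U, the probability distortion T_d and the utility transform T^u commute: T_d ∘ T^u = T^u ∘ T_d as maps from M to M. -/

import Mathlib

/-!
For a continuous increasing `u`, the set `{u ≤ x}` is `ℝ`, empty, or a closed half-line
`(-∞, c]`; accordingly `T^u F x` is `1`, `0` or `F c`. In the last case `u c = x`, and
`C y = sup {u ≤ y}` satisfies `C y > c` (continuity of `u`) and `C y → c` as `y ↓ x`. Hence
`d (T^u F y) = d (F (C y))` tends to the right limit of `d ∘ F` at `c`, which is
`T^u (T_d F) x`. If `{u ≤ x}` is empty, then for `y` close to `x` the set `{u ≤ y}` lies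
below the support of `F`, so `d (T^u F y) = d 0 = 0`; if it is `ℝ`, both sides are `1`.
-/

open MeasureTheory Filter Topology Set

noncomputable section

/-- The set of cdfs of compactly supported probability distributions on ℝ:
increasing, right-continuous, equal to `0` for all sufficiently small `x` and
equal to `1` for all sufficiently large `x`. -/
def mSet : Set (ℝ → ℝ) :=
  {F | Monotone F ∧ (∀ x, ContinuousWithinAt F (Set.Ici x) x) ∧
    (∃ a, ∀ x ≤ a, F x = 0) ∧ (∃ b, ∀ x, b ≤ x → F x = 1)}

/-- The set of cdfs of all probability distributions on ℝ: increasing,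
right-continuous, with limit `0` at `-∞` and limit `1` at `+∞`. -/
def m0Set : Set (ℝ → ℝ) :=
  {F | Monotone F ∧ (∀ x, ContinuousWithinAt F (Set.Ici x) x) ∧
    Tendsto F atBot (𝓝 0) ∧ Tendsto F atTop (𝓝 1)}

/-- A utility function: increasing (non-strict) and continuous. -/
def IsUF (u : ℝ → ℝ) : Prop := Monotone u ∧ Continuous u

/-- An increasing and left-continuous function on ℝ. -/
def IsLeftCtsIncr (u : ℝ → ℝ) : Prop :=
  Monotone u ∧ ∀ x, ContinuousWithinAt u (Set.Iic x) x

/-- A distortion function: an increasing function `d : [0,1] → [0,1]` with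
`d 0 = 0` and `d 1 = 1` (values outside `[0,1]` are irrelevant). -/
def IsDF (d : ℝ → ℝ) : Prop :=
  MonotoneOn d (Set.Icc 0 1) ∧ d 0 = 0 ∧ d 1 = 1

/-- Right-continuity of a distortion function on `[0,1)`. -/
def DFRightCts (d : ℝ → ℝ) : Prop :=
  ∀ x ∈ Set.Ico (0:ℝ) 1, ContinuousWithinAt d (Set.Ioi x) x

/-- A distortion function with moreover `d(0+) = 0` and `d(1-) = 1`. -/
def IsDFhat (d : ℝ → ℝ) : Prop :=
  IsDF d ∧ Tendsto d (𝓝[>] (0:ℝ)) (𝓝 0) ∧ Tendsto d (𝓝[<] (1:ℝ)) (𝓝 1)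

/-- The probability distortion generated by `d`:  `T_d F x = (d ∘ F)(x+)`,
the right limit of `d ∘ F` at `x`. -/
noncomputable def distortT (d F : ℝ → ℝ) : ℝ → ℝ :=
  fun x => Function.rightLim (d ∘ F) x

/-- The utility transform `T^u`: it maps a cdf `F` to the cdf of the
pushforward under `u` of the probability measure with cdf `F`. -/
noncomputable def utilityT (u F : ℝ → ℝ) : ℝ → ℝ := by
  classical
  exact
    if h : Monotone F ∧ ∀ x, ContinuousWithinAt F (Set.Ici x) x then
      fun x => ((StieltjesFunction.measure ⟨F, h.1, h.2⟩).map u (Set.Iic x)).toReal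
    else F

/-- Left quantile `F_L^{-1}(p) = inf {x | F x ≥ p}`. -/
noncomputable def leftQ (F : ℝ → ℝ) (p : ℝ) : ℝ := sInf {x | p ≤ F x}

/-- Right quantile `F_R^{-1}(p) = inf {x | F x > p}`. -/
noncomputable def rightQ (F : ℝ → ℝ) (p : ℝ) : ℝ := sInf {x | p < F x}

/-- A sublevel set of `u` that is neither empty nor all of `ℝ` is the closed half-line ending at
its supremum. -/
lemma sublevel_eq_Iic {u : ℝ → ℝ} (hu : IsUF u) {x s t : ℝ} (hs : u s ≤ x) (ht : x < u t) :
    u ⁻¹' Iic x = Iic (sSup (u ⁻¹' Iic x)) := by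
  have hbdd : BddAbove (u ⁻¹' Iic x) :=
    ⟨t, fun z hz => le_of_lt (hu.1.reflect_lt (lt_of_le_of_lt hz ht))⟩
  have hmem : sSup (u ⁻¹' Iic x) ∈ u ⁻¹' Iic x :=
    (isClosed_Iic.preimage hu.2).csSup_mem ⟨s, hs⟩ hbdd
  ext z
  exact ⟨fun hz => le_csSup hbdd hz, fun hz => (hu.1 hz).trans hmem⟩

lemma utilityT_apply {u F : ℝ → ℝ} (hu : IsUF u) (hF : F ∈ mSet) (x : ℝ) :
    utilityT u F x =
      ((StieltjesFunction.measure ⟨F, hF.1, hF.2.1⟩) (u ⁻¹' Iic x)).toReal := by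
  have h : Monotone F ∧ ∀ x, ContinuousWithinAt F (Set.Ici x) x := ⟨hF.1, hF.2.1⟩
  rw [utilityT, dif_pos h, Measure.map_apply hu.2.measurable measurableSet_Iic]

lemma tendsto_atBot_of_mem {F : ℝ → ℝ} (hF : F ∈ mSet) : Tendsto F atBot (𝓝 0) := by
  obtain ⟨a, ha⟩ := hF.2.2.1
  exact tendsto_const_nhds.congr' ((eventually_le_atBot a).mono fun x hx => (ha x hx).symm)

lemma tendsto_atTop_of_mem {F : ℝ → ℝ} (hF : F ∈ mSet) : Tendsto F atTop (𝓝 1) := by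
  obtain ⟨b, hb⟩ := hF.2.2.2
  exact tendsto_const_nhds.congr' ((eventually_ge_atTop b).mono fun x hx => (hb x hx).symm)

lemma mem_Icc_of_mem {F : ℝ → ℝ} (hF : F ∈ mSet) (x : ℝ) : F x ∈ Icc (0 : ℝ) 1 :=
  ⟨hF.1.le_of_tendsto (tendsto_atBot_of_mem hF) x, hF.1.ge_of_tendsto (tendsto_atTop_of_mem hF) x⟩

lemma utilityT_of_Iic {u F : ℝ → ℝ} (hu : IsUF u) (hF : F ∈ mSet) {x c : ℝ}
    (h : u ⁻¹' Iic x = Iic c) : utilityT u F x = F c := by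
  rw [utilityT_apply hu hF, h, StieltjesFunction.measure_Iic _ (tendsto_atBot_of_mem hF),
    sub_zero]
  exact ENNReal.toReal_ofReal (mem_Icc_of_mem hF c).1

lemma utilityT_of_univ {u F : ℝ → ℝ} (hu : IsUF u) (hF : F ∈ mSet) {x : ℝ}
    (h : ∀ t, u t ≤ x) : utilityT u F x = 1 := by
  have h' : u ⁻¹' Iic x = univ := eq_univ_of_forall h
  rw [utilityT_apply hu hF, h',
    StieltjesFunction.measure_univ _ (tendsto_atBot_of_mem hF) (tendsto_atTop_of_mem hF)]
  simp

/-- Here `{u ≤ x}`, possibly empty, lies to the left of `a` and so carries no mass. -/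
lemma utilityT_of_subset {u F : ℝ → ℝ} (hu : IsUF u) (hF : F ∈ mSet) {x a : ℝ}
    (ha : F a = 0) (h : x < u a) : utilityT u F x = 0 := by
  have hsub : u ⁻¹' Iic x ⊆ Iic a :=
    fun z hz => le_of_lt (hu.1.reflect_lt (lt_of_le_of_lt hz h))
  have h0 : (StieltjesFunction.measure ⟨F, hF.1, hF.2.1⟩) (Iic a) = 0 := by
    rw [StieltjesFunction.measure_Iic _ (tendsto_atBot_of_mem hF), sub_zero]
    exact ENNReal.ofReal_eq_zero.2 ha.le
  rw [utilityT_apply hu hF, measure_mono_null hsub h0, ENNReal.toReal_zero]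

lemma monotone_comp {d F : ℝ → ℝ} (hd : IsDF d) (hF : F ∈ mSet) : Monotone (d ∘ F) :=
  fun _ _ hxy => hd.1 (mem_Icc_of_mem hF _) (mem_Icc_of_mem hF _) (hF.1 hxy)

/-- `T_d` maps `M` to `M`. -/
lemma distortT_mem {d F : ℝ → ℝ} (hd : IsDF d) (hF : F ∈ mSet) : distortT d F ∈ mSet := by
  have hm := monotone_comp hd hF
  refine ⟨hm.rightLim, hm.stieltjesFunction.right_continuous', ?_, ?_⟩
  · obtain ⟨a, ha⟩ := hF.2.2.1
    refine ⟨a - 1, fun x hx => rightLim_eq_of_tendsto (tendsto_const_nhds.congr' ?_)⟩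
    filter_upwards [Ioo_mem_nhdsGT (show x < a by linarith)] with y hy
    simp [ha y hy.2.le, hd.2.1]
  · obtain ⟨b, hb⟩ := hF.2.2.2
    refine ⟨b, fun x hx => rightLim_eq_of_tendsto (tendsto_const_nhds.congr' ?_)⟩
    filter_upwards [self_mem_nhdsWithin] with y hy
    simp [hb y (hx.trans (le_of_lt hy)), hd.2.2]

/-- For every distortion function `d` and every utility function `u`, the
probability distortion `T_d` and the utility transform `T^u` commute as maps
from `M` to `M`. -/
theorem stmt1 (d u : ℝ → ℝ) (hd : IsDF d) (hu : IsUF u) :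
    ∀ F ∈ mSet, distortT d (utilityT u F) = utilityT u (distortT d F) := by
  intro F hF
  have hG := distortT_mem hd hF
  funext x
  refine rightLim_eq_of_tendsto ?_
  by_cases htop : ∀ t, u t ≤ x
  · rw [utilityT_of_univ hu hG htop]
    refine tendsto_const_nhds.congr' ?_
    filter_upwards [self_mem_nhdsWithin] with y hy
    have hy' : ∀ t, u t ≤ y := fun t => (htop t).trans (le_of_lt hy)
    simp [utilityT_of_univ hu hF hy', hd.2.2]
  by_cases hbot : ∀ t, x < u t
  · obtain ⟨a, ha⟩ := hF.2.2.1
    obtain ⟨a', ha'⟩ := hG.2.2.1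
    rw [utilityT_of_subset hu hG (ha' a' le_rfl) (hbot a')]
    refine tendsto_const_nhds.congr' ?_
    filter_upwards [Ioo_mem_nhdsGT (hbot a)] with y hy
    simp [utilityT_of_subset hu hF (ha a le_rfl) hy.2, hd.2.1]
  push Not at htop hbot
  obtain ⟨t, ht⟩ := htop
  obtain ⟨s, hs⟩ := hbot
  obtain ⟨c, hc⟩ : ∃ c, u ⁻¹' Iic x = Iic c := ⟨_, sublevel_eq_Iic hu hs ht⟩
  have hlt : ∀ z, c < z → x < u z := fun z hz => by
    by_contra! hle
    have : z ∈ Iic c := hc ▸ (show z ∈ u ⁻¹' Iic x from hle)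
    exact absurd this (not_le.2 hz)
  have huc : u c ≤ x := by
    have : c ∈ u ⁻¹' Iic x := hc ▸ self_mem_Iic
    exact this
  have hIic : ∀ᶠ y in 𝓝[>] x, u ⁻¹' Iic y = Iic (sSup (u ⁻¹' Iic y)) := by
    filter_upwards [Ioo_mem_nhdsGT ht] with y hy
    exact sublevel_eq_Iic hu (hs.trans hy.1.le) hy.2
  have hlim : Tendsto (fun y => sSup (u ⁻¹' Iic y)) (𝓝[>] x) (𝓝[>] c) := by
    -- Continuity of `u` at `c` gives a point `z > c` with `u z < y`, so `c` is not the supremum.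
    have hgt : ∀ᶠ y in 𝓝[>] x, c < sSup (u ⁻¹' Iic y) := by
      filter_upwards [hIic, self_mem_nhdsWithin] with y hy hxy
      have hev : ∀ᶠ z in 𝓝[>] c, u z < y :=
        (hu.2.continuousAt.eventually_lt_const (lt_of_le_of_lt huc hxy)).filter_mono
          nhdsWithin_le_nhds
      obtain ⟨z, hz, hcz⟩ := (hev.and self_mem_nhdsWithin).exists
      have : z ∈ Iic (sSup (u ⁻¹' Iic y)) := hy ▸ (show z ∈ u ⁻¹' Iic y from hz.le)
      exact lt_of_lt_of_le hcz this
    refine tendsto_nhdsWithin_iff.2 ⟨tendsto_order.2 ⟨fun z hz => ?_, fun z hz => ?_⟩, hgt⟩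
    · exact hgt.mono fun y hy => hz.trans hy
    · filter_upwards [hIic, Ioo_mem_nhdsGT (hlt z hz)] with y hy hyz
      have : sSup (u ⁻¹' Iic y) ∈ u ⁻¹' Iic y := by
        rw [hy]
        simp
      exact hu.1.reflect_lt (lt_of_le_of_lt this hyz.2)
  rw [utilityT_of_Iic hu hG hc]
  refine (((monotone_comp hd hF).tendsto_rightLim c).comp hlim).congr' ?_
  filter_upwards [hIic] with y hy
  simp only [Function.comp_apply]
  rw [utilityT_of_Iic hu hF hy]
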